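/- Let I be a submodule of K[x₁,…,xₙ]^d generated by finitely many homogeneous elements, where K is a field with valuation, and let B be the set of module monomials x^u·e_k that do not belong to the initial submodule in_{w,≺}(I). Then the residue classes of the elements of B form a K-vector space basis of the quotient K[x₁,…,xₙ]^d / I. -/

import Mathlib

/-!
Let `in(I)` be the set of monomials of initial terms of elements of `I`; it is the set of monomials
of `in_{w,≺}(I)`. A nonzero `K`-combination of monomials outside `in(I)` has its initial monomial
outside `in(I)`, so it is not in `I`; this is linear independence modulo `I`.

For spanning, division by initial terms need not terminate, since the valuation of the coefficients
can keep growing, and it is replaced by a dimension count in each degree. Elements with pairwise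
distinct initial monomials are linearly independent. In degree `δ`, every monomial `m` is the
initial monomial of an element of `I + span B` of degree `δ`: of `m` itself if `m ∈ B`, and
otherwise of the degree `δ` component of an element of `I`. So `I + span B` contains as many
independent elements of degree `δ` as there are monomials of that degree, hence all of them.
-/

open MvPolynomial

/-- A (real-valued, additive) valuation on a field `K`:
`v(ab) = v(a)+v(b)` for nonzero `a,b`, `v(a+b) ≥ min(v a, v b)`, and `v a = ∞ ↔ a = 0`. -/
structure ValOn (K : Type*) [Field K] where
  v : K → WithTop ℝ
  v_mul : ∀ a b : K, a ≠ 0 → b ≠ 0 → v (a * b) = v a + v b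
  v_add_min : ∀ a b : K, min (v a) (v b) ≤ v (a + b)
  v_eq_top_iff : ∀ a : K, v a = ⊤ ↔ a = 0

/-- A module monomial `x^u·e_k` of `R[x₁,…,xₙ]^d`, recorded as the pair `(u, k)`. -/
abbrev MMon (n d : ℕ) := (Fin n →₀ ℕ) × Fin d

/-- A term `c·x^u·e_k`, recorded as `(c, (u, k))`. -/
abbrev Term (R : Type*) (n d : ℕ) := R × MMon n d

/-- The strict order on module monomials induced by the monomial order `mo`:
`x^α·e_i ≺ x^β·e_j` iff `x^α ≺ x^β`, or `x^α = x^β` and `i < j`. -/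
def mmLt {n d : ℕ} (mo : MonomialOrder (Fin n)) (a b : MMon n d) : Prop :=
  mo.toSyn a.1 < mo.toSyn b.1 ∨ (a.1 = b.1 ∧ a.2 < b.2)

/-- The dot product `w·u` of a weight vector with an exponent vector. -/
def wdot {n : ℕ} (w : Fin n → ℝ) (u : Fin n →₀ ℕ) : ℝ := ∑ i, w i * (u i : ℝ)

/-- The weight `ν(c) + w·u` of a term `c·x^u·e_k`. -/
def twt {R : Type*} {n d : ℕ} (ν : R → WithTop ℝ) (w : Fin n → ℝ) (t : Term R n d) :
    WithTop ℝ :=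
  ν t.1 + (wdot w t.2.1 : ℝ)

/-- The term (pre)order: `c·x^u·e_i ≤ c'·x^{u'}·e_j` iff `ν(c) + w·u < ν(c') + w·u'`, or
they are equal and `x^u·e_i ⪰ x^{u'}·e_j` (smaller terms are "more initial"). -/
def termLE {R : Type*} {n d : ℕ} (ν : R → WithTop ℝ) (w : Fin n → ℝ)
    (mo : MonomialOrder (Fin n)) (t t' : Term R n d) : Prop :=
  twt ν w t < twt ν w t' ∨
    (twt ν w t = twt ν w t' ∧ (mmLt mo t'.2 t.2 ∨ t.2 = t'.2))

/-- The coefficient of `f ∈ R[x₁,…,xₙ]^d` at the module monomial `m = (u, k)`. -/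
def coeffM {R : Type*} [CommSemiring R] {n d : ℕ} (f : Fin d → MvPolynomial (Fin n) R)
    (m : MMon n d) : R :=
  coeff m.1 (f m.2)

/-- `t` is the initial term `in_{w,≺}(f)` of `f`: it is a term of `f` which is least
in the term order among all terms of `f`. -/
def IsInit {R : Type*} [CommSemiring R] {n d : ℕ} (ν : R → WithTop ℝ) (w : Fin n → ℝ)
    (mo : MonomialOrder (Fin n)) (f : Fin d → MvPolynomial (Fin n) R) (t : Term R n d) : Prop :=
  t.1 ≠ 0 ∧ coeffM f t.2 = t.1 ∧
    ∀ m : MMon n d, coeffM f m ≠ 0 → termLE ν w mo t (coeffM f m, m)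

/-- The term `c·x^u·e_k` as an element of `R[x₁,…,xₙ]^d`. -/
noncomputable def termEl {R : Type*} [CommSemiring R] {n d : ℕ} (t : Term R n d) :
    Fin d → MvPolynomial (Fin n) R :=
  Pi.single t.2.2 (monomial t.2.1 t.1)

/-- The initial submodule `in_{w,≺}(I)`: the submodule generated by the initial terms of
the nonzero elements of `I`. -/
noncomputable def inSub {R : Type*} [CommRing R] {n d : ℕ} (ν : R → WithTop ℝ)
    (w : Fin n → ℝ) (mo : MonomialOrder (Fin n))
    (I : Submodule (MvPolynomial (Fin n) R) (Fin d → MvPolynomial (Fin n) R)) :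
    Submodule (MvPolynomial (Fin n) R) (Fin d → MvPolynomial (Fin n) R) :=
  Submodule.span _ {g | ∃ f ∈ I, f ≠ 0 ∧ ∃ t : Term R n d, IsInit ν w mo f t ∧ g = termEl t}

/-- `f ∈ R[x₁,…,xₙ]^d` is homogeneous (of some degree `δ`). -/
def IsHomog {R : Type*} [CommSemiring R] {n d : ℕ} (f : Fin d → MvPolynomial (Fin n) R) : Prop :=
  ∃ δ : ℕ, ∀ m : MMon n d, coeffM f m ≠ 0 → (∑ i, m.1 i) = δ

/-- The additive valuation of Mathlib with the same values. The axioms of `ValOn` give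
`v 1 = 0` because `v 1 = v 1 + v 1` is finite. -/
noncomputable def ValOn.toAddValuation {K : Type*} [Field K] (V : ValOn K) :
    AddValuation K (WithTop ℝ) :=
  AddValuation.of V.v ((V.v_eq_top_iff 0).2 rfl)
    (by
      have h_one : V.v 1 ≠ ⊤ := mt (V.v_eq_top_iff 1).1 one_ne_zero
      have h_add : V.v 1 = V.v 1 + V.v 1 := by
        simpa only [mul_one] using V.v_mul 1 1 one_ne_zero one_ne_zero
      lift V.v 1 to ℝ using h_one with r
      norm_cast at h_add ⊢
      linarith)
    V.v_add_min
    (by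
      intro a b
      rcases eq_or_ne a 0 with rfl | ha
      · rw [zero_mul, (V.v_eq_top_iff 0).2 rfl, top_add]
      rcases eq_or_ne b 0 with rfl | hb
      · rw [mul_zero, (V.v_eq_top_iff 0).2 rfl, add_top]
      exact V.v_mul a b ha hb)

theorem ValOn.coe_toAddValuation {K : Type*} [Field K] (V : ValOn K) :
    ⇑V.toAddValuation = V.v := rfl

section MonomialBasis

variable {R : Type*} [CommSemiring R] {n d : ℕ}

variable (R n d) in
/-- The `R`-basis of `R[x₁,…,xₙ]^d` consisting of the module monomials `x^u·e_k`; its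
coordinates are the coefficients `coeffM`. -/
noncomputable def monomialBasis : Module.Basis (MMon n d) R (Fin d → MvPolynomial (Fin n) R) :=
  (Pi.basis fun _ : Fin d => basisMonomials (Fin n) R).reindex
    ((Equiv.sigmaEquivProd _ _).trans (Equiv.prodComm _ _))

theorem monomialBasis_repr_apply (f : Fin d → MvPolynomial (Fin n) R) (m : MMon n d) :
    (monomialBasis R n d).repr f m = coeffM f m := by
  rw [monomialBasis, Module.Basis.repr_reindex_apply]
  rfl

theorem monomialBasis_apply (m : MMon n d) : monomialBasis R n d m = termEl (1, m) := by
  rw [monomialBasis, Module.Basis.reindex_apply]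
  simp [termEl, Pi.basis_apply]

theorem coeffM_monomialBasis (m m' : MMon n d) :
    coeffM (monomialBasis R n d m) m' = if m = m' then 1 else 0 := by
  rw [← monomialBasis_repr_apply, Module.Basis.repr_self_apply]

theorem coeffM_monomial_smul (a : Fin n →₀ ℕ) (b : R) (f : Fin d → MvPolynomial (Fin n) R)
    (m : MMon n d) :
    coeffM (monomial a b • f) m = if a ≤ m.1 then b * coeffM f (m.1 - a, m.2) else 0 := by
  simp only [coeffM, Pi.smul_apply, smul_eq_mul, coeff_monomial_mul']

theorem mem_span_monomialBasis_image {S : Set (MMon n d)}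
    {f : Fin d → MvPolynomial (Fin n) R} :
    f ∈ Submodule.span R (monomialBasis R n d '' S) ↔ ∀ m, coeffM f m ≠ 0 → m ∈ S := by
  simp only [Module.Basis.mem_span_image, Set.subset_def, Finset.mem_coe, Finsupp.mem_support_iff,
    monomialBasis_repr_apply]

theorem exists_eq_add_of_coeffM_smul_termEl_ne_zero {r : MvPolynomial (Fin n) R}
    {t : Term R n d} {m : MMon n d} (h : coeffM (r • termEl t) m ≠ 0) :
    ∃ a, m = (a + t.2.1, t.2.2) := by
  obtain ⟨c, u, k⟩ := t
  obtain ⟨u', k'⟩ := m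
  obtain rfl : k' = k := by
    by_contra hk
    exact h (by simp [coeffM, termEl, hk])
  have hle : u ≤ u' := by
    by_contra hle
    exact h (by simp [coeffM, termEl, coeff_mul_monomial', hle])
  exact ⟨u' - u, by rw [tsub_add_cancel_of_le hle]⟩

end MonomialBasis

section Homogeneous

variable {R : Type*} [CommSemiring R] {n d : ℕ}

/-- The homogeneous component of degree `δ` of an element of `R[x₁,…,xₙ]^d`, taken in each
coordinate. -/
noncomputable def homogComp (δ : ℕ) :
    (Fin d → MvPolynomial (Fin n) R) →ₗ[R] (Fin d → MvPolynomial (Fin n) R) :=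
  (homogeneousComponent δ).compLeft (Fin d)

theorem coeffM_homogComp (δ : ℕ) (f : Fin d → MvPolynomial (Fin n) R) (m : MMon n d) :
    coeffM (homogComp δ f) m = if m.1.degree = δ then coeffM f m else 0 :=
  coeff_homogeneousComponent δ (f m.2) m.1

theorem homogComp_of_isHomogeneous {ε : ℕ} {f : Fin d → MvPolynomial (Fin n) R}
    (hf : ∀ k, (f k).IsHomogeneous ε) (δ : ℕ) : homogComp δ f = if δ = ε then f else 0 := by
  ext1 k
  rw [ite_apply]
  exact homogeneousComponent_of_mem (hf k)

theorem IsHomog.exists_isHomogeneous {f : Fin d → MvPolynomial (Fin n) R} (hf : IsHomog f) :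
    ∃ ε, ∀ k, (f k).IsHomogeneous ε := by
  obtain ⟨ε, hε⟩ := hf
  refine ⟨ε, fun k u hu => ?_⟩
  rw [← hε (u, k) hu, ← Finsupp.degree_eq_sum, Finsupp.degree_eq_weight_one]
  rfl

theorem homogComp_mem_span {S : Set (Fin d → MvPolynomial (Fin n) R)} (hS : ∀ g ∈ S, IsHomog g)
    {f : Fin d → MvPolynomial (Fin n) R} (hf : f ∈ Submodule.span (MvPolynomial (Fin n) R) S)
    (δ : ℕ) : homogComp δ f ∈ Submodule.span (MvPolynomial (Fin n) R) S := by
  induction hf using Submodule.closure_induction with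
  | zero => simp only [map_zero, zero_mem]
  | add f g _ _ hf hg => simpa only [map_add] using add_mem hf hg
  | smul_mem r g hg =>
    obtain ⟨ε, hε⟩ := (hS g hg).exists_isHomogeneous
    rw [← sum_homogeneousComponent r, Finset.sum_smul, map_sum]
    refine Submodule.sum_mem _ fun i _ => ?_
    have h_homog (k : Fin d) : ((homogeneousComponent i r • g) k).IsHomogeneous (i + ε) :=
      (homogeneousComponent_isHomogeneous i r).mul (hε k)
    rw [homogComp_of_isHomogeneous h_homog]
    split_ifs
    · exact Submodule.smul_mem _ _ (Submodule.subset_span hg)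
    · exact zero_mem _

end Homogeneous

section InitialTerm

variable {R : Type*} {n d : ℕ} {ν : R → WithTop ℝ} {w : Fin n → ℝ} {mo : MonomialOrder (Fin n)}

variable (ν w mo) in
/-- The key of a term in a linear order: `termLE` is the comparison of keys, so that terms can be
minimised over finite sets. Weights come first; the monomials are in the dual order since a
`≺`-greater monomial is more initial. -/
noncomputable def termKey (t : Term R n d) : WithTop ℝ ×ₗ (mo.syn ×ₗ Fin d)ᵒᵈ :=
  toLex (twt ν w t, OrderDual.toDual (toLex (mo.toSyn t.2.1, t.2.2)))

theorem termLE_iff_termKey_le {t t' : Term R n d} :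
    termLE ν w mo t t' ↔ termKey ν w mo t ≤ termKey ν w mo t' := by
  simp only [termLE, termKey, mmLt, Prod.Lex.toLex_le_toLex, OrderDual.toDual_le_toDual,
    Prod.ext_iff, EmbeddingLike.apply_eq_iff_eq, le_iff_lt_or_eq (a := t'.2.2)]
  grind

theorem monomial_eq_of_termKey_eq {t t' : Term R n d}
    (h : termKey ν w mo t = termKey ν w mo t') : t.2 = t'.2 := by
  simp only [termKey, EmbeddingLike.apply_eq_iff_eq, Prod.mk.injEq] at h
  exact Prod.ext h.2.1 h.2.2

theorem lt_of_termKey_lt {c c' : R} {m : MMon n d}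
    (h : termKey ν w mo (c, m) < termKey ν w mo (c', m)) : ν c < ν c' := by
  simp only [termKey, Prod.Lex.toLex_lt_toLex, lt_irrefl, and_false, or_false, twt] at h
  exact lt_of_add_lt_add_right h

variable [CommSemiring R]

theorem exists_isInit (ν : R → WithTop ℝ) (w : Fin n → ℝ) (mo : MonomialOrder (Fin n))
    {f : Fin d → MvPolynomial (Fin n) R} (hf : f ≠ 0) :
    ∃ t, IsInit ν w mo f t := by
  have h_support : ((monomialBasis R n d).repr f).support.Nonempty := by
    simpa only [Finsupp.support_nonempty_iff, ne_eq, LinearEquiv.map_eq_zero_iff] using hf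
  obtain ⟨m, hm, hmin⟩ := Finset.exists_min_image _
    (fun m => termKey ν w mo (coeffM f m, m)) h_support
  simp only [Finsupp.mem_support_iff, monomialBasis_repr_apply] at hm hmin
  exact ⟨(coeffM f m, m), hm, rfl, fun m' hm' => termLE_iff_termKey_le.2 (hmin m' hm')⟩

theorem isInit_monomialBasis [Nontrivial R] (ν : R → WithTop ℝ) (w : Fin n → ℝ)
    (mo : MonomialOrder (Fin n)) (m : MMon n d) :
    IsInit ν w mo (monomialBasis R n d m) (1, m) := by
  refine ⟨one_ne_zero, by rw [coeffM_monomialBasis, if_pos rfl], fun m' hm' => ?_⟩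
  obtain rfl : m = m' := by
    by_contra hne
    exact hm' (by rw [coeffM_monomialBasis, if_neg hne])
  rw [coeffM_monomialBasis, if_pos rfl]
  exact termLE_iff_termKey_le.2 le_rfl

theorem IsInit.ne_zero {f : Fin d → MvPolynomial (Fin n) R} {t : Term R n d}
    (h : IsInit ν w mo f t) : f ≠ 0 := by
  rintro rfl
  exact h.1 h.2.1.symm

theorem IsInit.homogComp {f : Fin d → MvPolynomial (Fin n) R} {t : Term R n d}
    (h : IsInit ν w mo f t) : IsInit ν w mo (homogComp t.2.1.degree f) t := by
  obtain ⟨h_ne, h_coeff, h_min⟩ := h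
  refine ⟨h_ne, by rw [coeffM_homogComp, if_pos rfl, h_coeff], fun m hm => ?_⟩
  rw [coeffM_homogComp] at hm ⊢
  obtain ⟨hdeg, hm⟩ := ite_ne_right_iff.1 hm
  rw [if_pos hdeg]
  exact h_min m hm

/-- The module monomials occurring in the initial terms of elements of `I`; they turn out to be
the monomials of `in_{w,≺}(I)`, see `termEl_mem_inSub_iff`. -/
def initMonomials (ν : R → WithTop ℝ) (w : Fin n → ℝ) (mo : MonomialOrder (Fin n))
    (I : Submodule (MvPolynomial (Fin n) R) (Fin d → MvPolynomial (Fin n) R)) : Set (MMon n d) :=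
  {m | ∃ f ∈ I, ∃ c, IsInit ν w mo f (c, m)}

end InitialTerm

section Independence

variable {R : Type*} [CommRing R] {n d : ℕ}

theorem linearIndependent_mk_compl_initMonomials (ν : R → WithTop ℝ) (w : Fin n → ℝ)
    (mo : MonomialOrder (Fin n))
    (I : Submodule (MvPolynomial (Fin n) R) (Fin d → MvPolynomial (Fin n) R)) :
    LinearIndependent R fun m : ↥(initMonomials ν w mo I)ᶜ =>
      Submodule.Quotient.mk (p := I) (termEl ((1 : R), (m : MMon n d))) := by
  have h_disjoint : Disjoint
      (Submodule.span R (Set.range fun m : ↥(initMonomials ν w mo I)ᶜ => monomialBasis R n d m))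
      (LinearMap.ker (I.mkQ.restrictScalars R)) := by
    rw [Submodule.disjoint_def]
    intro f hf hfI
    rw [← Set.image_eq_range, mem_span_monomialBasis_image] at hf
    replace hfI : f ∈ I := (Submodule.Quotient.mk_eq_zero I).1 hfI
    by_contra hne
    obtain ⟨⟨c, m⟩, h_init⟩ := exists_isInit ν w mo hne
    exact hf m (h_init.2.1.symm ▸ h_init.1) ⟨f, hfI, c, h_init⟩
  simp only [← monomialBasis_apply]
  exact ((monomialBasis R n d).linearIndependent.comp _ Subtype.val_injective).map h_disjoint

end Independence

section TermOrder

variable {R : Type*} [CommRing R] {n d : ℕ} {v : AddValuation R (WithTop ℝ)} {w : Fin n → ℝ}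
  {mo : MonomialOrder (Fin n)}

theorem wdot_add (w : Fin n → ℝ) (a u : Fin n →₀ ℕ) : wdot w (a + u) = wdot w a + wdot w u := by
  simp only [wdot, Finsupp.add_apply, Nat.cast_add, mul_add, Finset.sum_add_distrib]

theorem twt_mul_add (b c : R) (a u : Fin n →₀ ℕ) (k : Fin d) :
    twt v w (b * c, (a + u, k)) = (v b + (wdot w a : ℝ)) + twt v w (c, (u, k)) := by
  simp only [twt, AddValuation.map_mul, wdot_add, WithTop.coe_add]
  abel

theorem termKey_mul_add_le_iff {b : R} (hb : v b ≠ ⊤) (a : Fin n →₀ ℕ) {c c' : R}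
    {u u' : Fin n →₀ ℕ} {k k' : Fin d} :
    termKey v w mo (b * c, (a + u, k)) ≤ termKey v w mo (b * c', (a + u', k')) ↔
      termKey v w mo (c, (u, k)) ≤ termKey v w mo (c', (u', k')) := by
  have h_finite : v b + (wdot w a : ℝ) ≠ ⊤ := WithTop.add_ne_top.2 ⟨hb, WithTop.coe_ne_top⟩
  simp only [termKey, twt_mul_add, Prod.Lex.toLex_le_toLex, OrderDual.toDual_le_toDual, map_add,
    add_lt_add_iff_left, add_right_inj, WithTop.add_lt_add_iff_left h_finite,
    WithTop.add_left_inj h_finite]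

end TermOrder

section Valuation

variable {K : Type*} [Field K] {n d : ℕ} {v : AddValuation K (WithTop ℝ)} {w : Fin n → ℝ}
  {mo : MonomialOrder (Fin n)}

theorem IsInit.monomial_smul {f : Fin d → MvPolynomial (Fin n) K} {t : Term K n d}
    (h : IsInit v w mo f t) (a : Fin n →₀ ℕ) {b : K} (hb : b ≠ 0) :
    IsInit v w mo (monomial a b • f) (b * t.1, (a + t.2.1, t.2.2)) := by
  obtain ⟨h_ne, h_coeff, h_min⟩ := h
  refine ⟨mul_ne_zero hb h_ne, by simp [coeffM_monomial_smul, h_coeff], ?_⟩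
  rintro ⟨u', k'⟩ hm
  rw [coeffM_monomial_smul] at hm ⊢
  obtain ⟨hle, hm⟩ := ite_ne_right_iff.1 hm
  obtain ⟨u, rfl⟩ := exists_add_of_le hle
  rw [if_pos hle]
  simp only [add_tsub_cancel_left] at hm ⊢
  exact termLE_iff_termKey_le.2 ((termKey_mul_add_le_iff (v.ne_top_iff.2 hb) a).2
    (termLE_iff_termKey_le.1 (h_min (u, k') (right_ne_zero_of_mul hm))))

theorem IsInit.smul {f : Fin d → MvPolynomial (Fin n) K} {t : Term K n d}
    (h : IsInit v w mo f t) {b : K} (hb : b ≠ 0) :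
    IsInit v w mo (b • f) (b * t.1, t.2) := by
  have h_smul : b • f = (monomial 0 b : MvPolynomial (Fin n) K) • f := by
    rw [← C_apply, C_eq_algebraMap, algebraMap_smul]
  rw [h_smul]
  simpa only [zero_add] using h.monomial_smul 0 hb

theorem IsInit.termKey_le {f : Fin d → MvPolynomial (Fin n) K} {t : Term K n d}
    (h : IsInit v w mo f t) (m : MMon n d) :
    termKey v w mo t ≤ termKey v w mo (coeffM f m, m) := by
  by_cases hm : coeffM f m = 0
  · refine Prod.Lex.toLex_le_toLex.2 (Or.inl ?_)
    simpa [twt, hm, lt_top_iff_ne_top] using h.1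
  · exact termLE_iff_termKey_le.1 (h.2.2 m hm)

theorem termEl_mem_inSub_iff
    {I : Submodule (MvPolynomial (Fin n) K) (Fin d → MvPolynomial (Fin n) K)} {m : MMon n d} :
    termEl (1, m) ∈ inSub v w mo I ↔ m ∈ initMonomials v w mo I := by
  constructor
  · suffices h_coeff : ∀ g ∈ inSub v w mo I, ∀ m, coeffM g m ≠ 0 → m ∈ initMonomials v w mo I by
      intro h
      exact h_coeff _ h m (by simp [← monomialBasis_apply, coeffM_monomialBasis])
    intro g hg
    rw [← mem_span_monomialBasis_image]
    induction hg using Submodule.closure_induction with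
    | zero => exact zero_mem _
    | add _ _ _ _ hf hg => exact add_mem hf hg
    | smul_mem r g hg =>
      obtain ⟨f, hf, -, t, ht, rfl⟩ := hg
      rw [mem_span_monomialBasis_image]
      intro m hm
      obtain ⟨a, rfl⟩ := exists_eq_add_of_coeffM_smul_termEl_ne_zero hm
      exact ⟨_, I.smul_mem _ hf, _, ht.monomial_smul a one_ne_zero⟩
  · rintro ⟨f, hf, c, h_init⟩
    have hc : c ≠ 0 := h_init.1
    have h_one : IsInit v w mo (c⁻¹ • f) (1, m) := by
      simpa only [inv_mul_cancel₀ hc] using h_init.smul (inv_ne_zero hc)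
    exact Submodule.subset_span
      ⟨c⁻¹ • f, I.smul_of_tower_mem _ hf, h_one.ne_zero, (1, m), h_one, rfl⟩

theorem sum_ne_zero_of_isInit {ι : Type*} {s : Finset ι} (hs : s.Nonempty)
    {F : ι → Fin d → MvPolynomial (Fin n) K} {t : ι → Term K n d}
    (hF : ∀ i ∈ s, IsInit v w mo (F i) (t i)) (ht : Set.InjOn (fun i => (t i).2) s) :
    ∑ i ∈ s, F i ≠ 0 := by
  classical
  -- The term of least key survives in the sum: its monomial occurs in the other summands only with
  -- coefficients of larger valuation.
  obtain ⟨i, hi, hmin⟩ := Finset.exists_min_image s (fun i => termKey v w mo (t i)) hs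
  have h_lt : ∀ j ∈ s.erase i, v (t i).1 < v (coeffM (F j) (t i).2) := by
    intro j hj
    obtain ⟨hji, hj⟩ := Finset.mem_erase.1 hj
    refine lt_of_termKey_lt (w := w) (mo := mo) (m := (t i).2) ?_
    calc termKey v w mo (t i) < termKey v w mo (t j) :=
          (hmin j hj).lt_of_ne fun h => hji (ht hj hi (monomial_eq_of_termKey_eq h).symm)
      _ ≤ termKey v w mo (coeffM (F j) (t i).2, (t i).2) := (hF j hj).termKey_le _
  have h_rest : v (t i).1 < v (∑ j ∈ s.erase i, coeffM (F j) (t i).2) :=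
    v.map_lt_sum (v.ne_top_iff.2 (hF i hi).1) h_lt
  intro h_zero
  have h_coeff : (t i).1 + ∑ j ∈ s.erase i, coeffM (F j) (t i).2 = 0 := by
    rw [← (hF i hi).2.1, Finset.add_sum_erase s (fun j => coeffM (F j) (t i).2) hi]
    simp only [← monomialBasis_repr_apply, ← Finsupp.finsetSum_apply, ← map_sum, h_zero, map_zero,
      Finsupp.zero_apply]
  rw [← neg_eq_of_add_eq_zero_right h_coeff, v.map_neg] at h_rest
  exact lt_irrefl _ h_rest

theorem linearIndependent_of_isInit {ι : Type*} {F : ι → Fin d → MvPolynomial (Fin n) K}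
    {t : ι → Term K n d} (hF : ∀ i, IsInit v w mo (F i) (t i))
    (ht : Function.Injective fun i => (t i).2) : LinearIndependent K F := by
  classical
  rw [linearIndependent_iff']
  intro s a h_sum i hi
  by_contra hai
  refine sum_ne_zero_of_isInit (v := v) (w := w) (mo := mo) (s := s.filter fun i => a i ≠ 0)
    (t := fun i => (a i * (t i).1, (t i).2)) ⟨i, Finset.mem_filter.2 ⟨hi, hai⟩⟩
    (fun j hj => (hF j).smul (Finset.mem_filter.1 hj).2) ht.injOn ?_
  rwa [Finset.sum_filter_of_ne fun j _ => left_ne_zero_of_smul]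

theorem span_monomialBasis_image_le_of_isInit {S : Set (MMon n d)} (hS : S.Finite)
    {U : Submodule K (Fin d → MvPolynomial (Fin n) K)}
    (hU : ∀ m ∈ S, ∃ f ∈ U ⊓ Submodule.span K (monomialBasis K n d '' S), ∃ c,
      IsInit v w mo f (c, m)) :
    Submodule.span K (monomialBasis K n d '' S) ≤ U := by
  set E := Submodule.span K (monomialBasis K n d '' S)
  have := hS.fintype
  have : FiniteDimensional K E := FiniteDimensional.span_of_finite K (hS.image _)
  choose F hF c h_init using hU
  have h_indep : LinearIndependent K fun m : S => (⟨F m m.2, hF m m.2⟩ : ↥(U ⊓ E)) :=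
    LinearIndependent.of_comp (U ⊓ E).subtype
      (linearIndependent_of_isInit (fun m : S => h_init m m.2) Subtype.val_injective)
  have h_card : Set.finrank K (monomialBasis K n d '' S) ≤ Fintype.card S := by
    rw [Set.image_eq_range]
    exact finrank_range_le_card _
  exact inf_eq_right.1 (Submodule.eq_of_le_of_finrank_le inf_le_right
    (h_card.trans h_indep.fintype_card_le_finrank))

theorem span_mk_compl_initMonomials_eq_top (v : AddValuation K (WithTop ℝ)) (w : Fin n → ℝ)
    (mo : MonomialOrder (Fin n))
    {I : Submodule (MvPolynomial (Fin n) K) (Fin d → MvPolynomial (Fin n) K)}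
    (hI : ∀ f ∈ I, ∀ δ, homogComp δ f ∈ I) :
    Submodule.span K (Set.range fun m : ↥(initMonomials v w mo I)ᶜ =>
      Submodule.Quotient.mk (p := I) (termEl ((1 : K), (m : MMon n d)))) = ⊤ := by
  set Q := Submodule.span K (Set.range fun m : ↥(initMonomials v w mo I)ᶜ =>
    Submodule.Quotient.mk (p := I) (termEl ((1 : K), (m : MMon n d))))
  set U := Q.comap (I.mkQ.restrictScalars K)
  have h_degree (δ : ℕ) :
      Submodule.span K (monomialBasis K n d '' {m | m.1.degree = δ}) ≤ U := by
    have h_finite : {m : MMon n d | m.1.degree = δ}.Finite :=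
      ((Finsupp.finite_of_degree_eq δ).prod Set.finite_univ).subset fun m hm => ⟨hm, trivial⟩
    refine span_monomialBasis_image_le_of_isInit (v := v) (w := w) (mo := mo) h_finite
      fun m hm => ?_
    by_cases hmI : m ∈ initMonomials v w mo I
    · obtain ⟨f, hf, c, h_init⟩ := hmI
      refine ⟨homogComp m.1.degree f, ⟨?_, ?_⟩, c, h_init.homogComp⟩
      · have h_mk : I.mkQ (homogComp m.1.degree f) = 0 :=
          (Submodule.Quotient.mk_eq_zero I).2 (hI f hf _)
        exact Submodule.mem_comap.2 (h_mk ▸ zero_mem Q)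
      · refine mem_span_monomialBasis_image.2 fun m' hm' => ?_
        rw [coeffM_homogComp] at hm'
        exact (ite_ne_right_iff.1 hm').1.trans hm
    · refine ⟨monomialBasis K n d m, ⟨?_, ?_⟩, 1, isInit_monomialBasis v w mo m⟩
      · rw [monomialBasis_apply]
        exact Submodule.subset_span ⟨⟨m, hmI⟩, rfl⟩
      · exact Submodule.subset_span ⟨m, hm, rfl⟩
  have hU : U = ⊤ := by
    rw [eq_top_iff, ← (monomialBasis K n d).span_eq, Submodule.span_le]
    rintro _ ⟨m, rfl⟩
    exact h_degree m.1.degree (Submodule.subset_span ⟨m, rfl, rfl⟩)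
  rw [eq_top_iff]
  rintro x -
  obtain ⟨f, rfl⟩ := Submodule.Quotient.mk_surjective I x
  exact (hU ▸ Submodule.mem_top : f ∈ U)

end Valuation

theorem monomial_basis_of_quotient_general {K : Type*} [Field K] {n d : ℕ}
    (V : ValOn K) (w : Fin n → ℝ) (mo : MonomialOrder (Fin n))
    (I : Submodule (MvPolynomial (Fin n) K) (Fin d → MvPolynomial (Fin n) K))
    (hgen : ∃ S : Set (Fin d → MvPolynomial (Fin n) K),
      (∀ g ∈ S, IsHomog g) ∧ Submodule.span (MvPolynomial (Fin n) K) S = I)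
    (B : Set (MMon n d))
    (hB : B = {m : MMon n d | termEl ((1 : K), m) ∉ inSub V.v w mo I}) :
    LinearIndependent K
      (fun m : B => Submodule.Quotient.mk (p := I) (termEl ((1 : K), (m : MMon n d)))) ∧
    Submodule.span K
      (Set.range fun m : B =>
        (Submodule.Quotient.mk (p := I) (termEl ((1 : K), (m : MMon n d))))) = ⊤ := by
  have hB_compl : B = (initMonomials V.toAddValuation w mo I)ᶜ := by
    ext m
    rw [hB, Set.mem_compl_iff, ← termEl_mem_inSub_iff, V.coe_toAddValuation]
    rfl
  subst hB_compl
  obtain ⟨S, hS, rfl⟩ := hgen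
  exact ⟨linearIndependent_mk_compl_initMonomials _ w mo _,
    span_mk_compl_initMonomials_eq_top _ w mo fun f hf δ => homogComp_mem_span hS hf δ⟩

/-- **Monomials outside the initial submodule form a basis of the quotient.**
Let `I` be a submodule of `K[x₁,…,xₙ]^d` generated by finitely many homogeneous elements and
let `B` be the set of module monomials `x^u·e_k` not belonging to `in_{w,≺}(I)`. Then the
residue classes of the elements of `B` form a `K`-vector space basis of `K[x₁,…,xₙ]^d / I`:
they are `K`-linearly independent and span the quotient over `K`. -/
theorem monomial_basis_of_quotient {K : Type*} [Field K] {n d : ℕ}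
    (V : ValOn K) (w : Fin n → ℝ) (mo : MonomialOrder (Fin n))
    (I : Submodule (MvPolynomial (Fin n) K) (Fin d → MvPolynomial (Fin n) K))
    (hgen : ∃ (s : ℕ) (g : Fin s → Fin d → MvPolynomial (Fin n) K),
      (∀ i, IsHomog (g i)) ∧ Submodule.span (MvPolynomial (Fin n) K) (Set.range g) = I)
    (B : Set (MMon n d))
    (hB : B = {m : MMon n d | termEl ((1 : K), m) ∉ inSub V.v w mo I}) :
    LinearIndependent K
      (fun m : B => Submodule.Quotient.mk (p := I) (termEl ((1 : K), (m : MMon n d)))) ∧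
    Submodule.span K
      (Set.range fun m : B =>
        (Submodule.Quotient.mk (p := I) (termEl ((1 : K), (m : MMon n d))))) = ⊤ := by
  obtain ⟨s, g, hg, hI⟩ := hgen
  exact monomial_basis_of_quotient_general V w mo I
    ⟨Set.range g, Set.forall_mem_range.2 hg, hI⟩ B hB
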